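/- Let A ⊂ ℝ² be a compact convex set with nonempty interior that is symmetric with respect to both coordinate axes (i.e. (x,y) ∈ A implies (−x,y) ∈ A and (x,−y) ∈ A). Set a := max{x : (x,0) ∈ A} and b := max{y : (0,y) ∈ A}. Then min_{m ∈ ℤ²∖{0}} sup_{x∈A} ⟨m,x⟩ = min(a,b), and for every vector v ∈ ℝ² with interior(A) + v ⊆ ℝ²_{>0} and every normalized symplectic capacity c on subsets of ℝ⁴, c(μ⁻¹(interior(A)+v)) = 2·min(a,b). (This is the statement that every ball-normalized capacity of the codisc bundle D_F*𝕋² of a flat reversible Finsler metric F on 𝕋² with F(q₁,q₂,v₁,v₂) = F(q₁,q₂,v₁,−v₂) equals twice its systole.) -/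

import Mathlib

open Set
open scoped Pointwise ENNReal

noncomputable section

/-- The standard symplectic form `ω₀` on `ℝ⁴ ≅ ℂ²`:
`ω₀(u,v) = Σⱼ (u_{xⱼ} v_{yⱼ} - u_{yⱼ} v_{xⱼ}) = Σⱼ Im(conj(uⱼ) · vⱼ)`. -/
def stdSymp4 (u v : ℂ × ℂ) : ℝ :=
  ((starRingEnd ℂ) u.1 * v.1).im + ((starRingEnd ℂ) u.2 * v.2).im

/-- `U` symplectically embeds into `V` inside `ℝ⁴ ≅ ℂ²`: there is a smooth injective
map on `U` with image in `V` whose derivative preserves `ω₀`. -/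
def SymplecticEmbeds4 (U V : Set (ℂ × ℂ)) : Prop :=
  ∃ f : ℂ × ℂ → ℂ × ℂ,
    ContDiffOn ℝ (⊤ : ℕ∞) f U ∧ Set.InjOn f U ∧ Set.MapsTo f U V ∧
    ∀ x ∈ U, ∀ u v : ℂ × ℂ,
      stdSymp4 (fderivWithin ℝ f U x u) (fderivWithin ℝ f U x v) = stdSymp4 u v

/-- The moment map `μ : ℂ² → ℝ²`, `μ(z) = π(|z₁|², |z₂|²)`. -/
def mu4 (z : ℂ × ℂ) : ℝ × ℝ :=
  (Real.pi * Complex.normSq z.1, Real.pi * Complex.normSq z.2)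

/-- The open Euclidean ball `B⁴(r) ⊆ ℂ²`. -/
def ball4 (r : ℝ) : Set (ℂ × ℂ) :=
  {z | Complex.normSq z.1 + Complex.normSq z.2 < r ^ 2}

/-- The open symplectic cylinder `Z⁴(r) = {z ∈ ℂ² : |z₁| < r}`. -/
def cyl4 (r : ℝ) : Set (ℂ × ℂ) :=
  {z | Complex.normSq z.1 < r ^ 2}

/-- A normalized symplectic capacity on subsets of `ℝ⁴ ≅ ℂ²`: monotone under
symplectic embeddings, conformal, and normalized on balls and cylinders. -/
def IsNormalizedCapacity4 (c : Set (ℂ × ℂ) → ℝ≥0∞) : Prop :=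
  (∀ U V : Set (ℂ × ℂ), SymplecticEmbeds4 U V → c U ≤ c V) ∧
  (∀ lam : ℝ, 0 < lam → ∀ U : Set (ℂ × ℂ),
    c (lam • U) = ENNReal.ofReal (lam ^ 2) * c U) ∧
  (∀ r : ℝ, 0 < r →
    c (ball4 r) = ENNReal.ofReal (Real.pi * r ^ 2) ∧
    c (cyl4 r) = ENNReal.ofReal (Real.pi * r ^ 2))

/-!
Write `m = min a b`. Both bounds come from products of area-preserving maps of the plane.

*Upper bound.* If, say, `a ≤ b`, then on `μ⁻¹(interior A + v)` the action `π|z₁|²` stays in an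
interval of length `2a`. Lowering the squared radius by a constant turns the corresponding annulus
into a punctured disc of area `2a`, so the whole domain embeds into a cylinder of capacity `2a`.

*Lower bound.* On the strip `|q| < π/2` the Hamiltonian `H = √(p² + δ²/cos² q)` is a smoothing of
`|p|` whose sublevel sets `H < h + δ` are discs of area `2πh`. Its action-angle coordinates form an
area-preserving identification of the plane with the strip for which `H = |z|²/2 + δ`, so that
`|p| ≤ |z|²/2 + δ`. In two copies, a ball of capacity slightly less than `2m` is sent, after
rescaling `p` by `π`, into the diamond `|x₁| + |x₂| < m`. The diamond lies in `A`, because `A` is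
convex, invariant under both reflections, and contains `(±t, 0)` and `(0, ±t)` for `0 ≤ t < m`.
-/

open scoped ContDiff

attribute [local instance] Complex.finrank_real_complex_fact

local notation "Ω" => Complex.orientation.areaForm

/-! ### Area-preserving maps of the plane -/

/-- The map `g` of the plane is smooth at `z` and its derivative there multiplies the area form
by `J`: the Jacobian condition `det (Dg z) = J`, phrased so that it composes and feeds directly
into the symplectic form of `ℂ²`. -/
def HasAreaFactorAt (g : ℂ → ℂ) (J : ℝ) (z : ℂ) : Prop :=
  ContDiffAt ℝ ∞ g z ∧ ∀ u v, Ω (fderiv ℝ g z u) (fderiv ℝ g z v) = J * Ω u v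

/-- The map `g` restricts to an area-preserving smooth embedding of the planar set `S`. The
derivative is the unrestricted one, so `g` is required to be smooth on a neighbourhood of `S`. -/
structure IsAreaEmbeddingOn (g : ℂ → ℂ) (S : Set ℂ) : Prop where
  injOn : InjOn g S
  hasAreaFactorAt : ∀ z ∈ S, HasAreaFactorAt g 1 z

theorem hasAreaFactorAt_id (z : ℂ) : HasAreaFactorAt id 1 z :=
  ⟨contDiffAt_id, by simp⟩

theorem HasAreaFactorAt.comp {g f : ℂ → ℂ} {J K : ℝ} {z : ℂ} (hg : HasAreaFactorAt g J (f z))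
    (hf : HasAreaFactorAt f K z) : HasAreaFactorAt (g ∘ f) (J * K) z := by
  refine ⟨hg.1.comp z hf.1, fun u v => ?_⟩
  rw [fderiv_comp z (hg.1.differentiableAt (by simp)) (hf.1.differentiableAt (by simp))]
  simp only [ContinuousLinearMap.comp_apply, hg.2, hf.2, mul_assoc]

theorem hasAreaFactorAt_of_re_im {g : ℂ → ℂ} {z : ℂ} {p' q' : ℂ →L[ℝ] ℝ}
    (hg : ContDiffAt ℝ ∞ g z) (hp : HasFDerivAt (fun w => (g w).re) p' z)
    (hq : HasFDerivAt (fun w => (g w).im) q' z) :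
    HasAreaFactorAt g (p' 1 * q' Complex.I - p' Complex.I * q' 1) z := by
  have hg' : HasFDerivAt g (fderiv ℝ g z) z := (hg.differentiableAt (by simp)).hasFDerivAt
  have hre : Complex.reCLM.comp (fderiv ℝ g z) = p' :=
    (Complex.reCLM.hasFDerivAt.comp z hg').unique hp
  have him : Complex.imCLM.comp (fderiv ℝ g z) = q' :=
    (Complex.imCLM.hasFDerivAt.comp z hg').unique hq
  have coord (l : ℂ →L[ℝ] ℝ) (u : ℂ) : l u = u.re * l 1 + u.im * l Complex.I := by
    conv_lhs => rw [← Complex.re_add_im u, ← mul_one (u.re : ℂ)]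
    simp only [← Complex.real_smul, map_add, map_smul, smul_eq_mul]
  refine ⟨hg, fun u v => ?_⟩
  have hreu (u : ℂ) : (fderiv ℝ g z u).re = p' u := congrArg (· u) hre
  have himu (u : ℂ) : (fderiv ℝ g z u).im = q' u := congrArg (· u) him
  simp only [Complex.areaForm, Complex.mul_im, Complex.conj_re, Complex.conj_im, hreu, himu]
  rw [coord p' u, coord p' v, coord q' u, coord q' v]
  ring

theorem contDiffAt_of_re_im {E : Type*} [NormedAddCommGroup E] [NormedSpace ℝ E]
    {n : WithTop ℕ∞} {g : E → ℂ} {z : E} (hp : ContDiffAt ℝ n (fun w => (g w).re) z)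
    (hq : ContDiffAt ℝ n (fun w => (g w).im) z) : ContDiffAt ℝ n g z :=
  Complex.equivRealProdCLM.symm.contDiff.contDiffAt.comp z (hp.prodMk hq)

theorem isAreaEmbeddingOn_id (S : Set ℂ) : IsAreaEmbeddingOn id S :=
  ⟨injOn_id S, fun z _ => hasAreaFactorAt_id z⟩

theorem IsAreaEmbeddingOn.comp {g f : ℂ → ℂ} {S T : Set ℂ} (hg : IsAreaEmbeddingOn g T)
    (hf : IsAreaEmbeddingOn f S) (hmaps : MapsTo f S T) : IsAreaEmbeddingOn (g ∘ f) S where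
  injOn := hg.injOn.comp hf.injOn hmaps
  hasAreaFactorAt z hz := by
    simpa using (hg.hasAreaFactorAt _ (hmaps hz)).comp (hf.hasAreaFactorAt z hz)

theorem IsAreaEmbeddingOn.mono {g : ℂ → ℂ} {S T : Set ℂ} (hg : IsAreaEmbeddingOn g T)
    (hST : S ⊆ T) : IsAreaEmbeddingOn g S :=
  ⟨hg.injOn.mono hST, fun z hz => hg.hasAreaFactorAt z (hST hz)⟩

/-- The rotation-invariant map of the plane that keeps angles and sends a point of squared
radius `s` to one of squared radius `s * ψ s` (where `ψ s` is nonnegative). -/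
def radialMap (ψ : ℝ → ℝ) (z : ℂ) : ℂ :=
  √(ψ (‖z‖ ^ 2)) • z

theorem norm_radialMap_sq {ψ : ℝ → ℝ} {z : ℂ} (hψ : 0 ≤ ψ (‖z‖ ^ 2)) :
    ‖radialMap ψ z‖ ^ 2 = ‖z‖ ^ 2 * ψ (‖z‖ ^ 2) := by
  rw [radialMap, norm_smul, mul_pow, Real.norm_eq_abs, sq_abs, Real.sq_sqrt hψ, mul_comm]

theorem injOn_radialMap {ψ : ℝ → ℝ} {S : Set ℝ} (hψ : ∀ s ∈ S, 0 < ψ s)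
    (hinj : InjOn (fun s => s * ψ s) S) : InjOn (radialMap ψ) {z | ‖z‖ ^ 2 ∈ S} := by
  intro z hz w hw hzw
  have hnorm : ‖z‖ ^ 2 = ‖w‖ ^ 2 := by
    refine hinj hz hw ?_
    dsimp only
    rw [← norm_radialMap_sq (hψ _ hz).le, ← norm_radialMap_sq (hψ _ hw).le, hzw]
  rw [radialMap, radialMap, hnorm] at hzw
  exact smul_right_injective ℂ (Real.sqrt_pos.2 (hψ _ hw)).ne' hzw

/- The factor is the derivative of `s ↦ s * ψ s`: half the squared radius is the action
variable. -/
theorem hasAreaFactorAt_radialMap {ψ : ℝ → ℝ} {ψ' : ℝ} {z : ℂ}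
    (hsmooth : ContDiffAt ℝ ∞ ψ (‖z‖ ^ 2)) (hψ' : HasDerivAt ψ ψ' (‖z‖ ^ 2))
    (hψ : 0 < ψ (‖z‖ ^ 2)) :
    HasAreaFactorAt (radialMap ψ) (ψ (‖z‖ ^ 2) + ‖z‖ ^ 2 * ψ') z := by
  set ρ := √(ψ (‖z‖ ^ 2))
  have hρ : ρ ≠ 0 := (Real.sqrt_pos.2 hψ).ne'
  have hfderiv : HasFDerivAt (radialMap ψ)
      (ρ • ContinuousLinearMap.id ℝ ℂ + ((ψ' / ρ) • innerSL ℝ z).smulRight z) z := by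
    have hscale : HasFDerivAt (fun w : ℂ => √(ψ (‖w‖ ^ 2))) ((ψ' / ρ) • innerSL ℝ z) z := by
      refine ((hψ'.comp_hasFDerivAt z (hasStrictFDerivAt_norm_sq z).hasFDerivAt).sqrt
        hψ.ne').congr_fderiv ?_
      ext u
      simp only [Function.comp_apply, one_div, mul_inv_rev, smul_apply, coe_innerSL_apply,
        Complex.inner, Complex.mul_re, Complex.conj_re, Complex.conj_im, mul_neg, sub_neg_eq_add,
        smul_add, nsmul_eq_mul, Nat.cast_ofNat, smul_eq_mul, ρ]
      field_simp
    exact hscale.smul (hasFDerivAt_id z)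
  refine ⟨((hsmooth.comp z (contDiff_norm_sq ℝ).contDiffAt).sqrt hψ.ne').smul contDiffAt_id,
    fun u v => ?_⟩
  have hswap : Ω u z = -Ω z u := Complex.orientation.areaForm_swap u z
  have hplane := Complex.orientation.inner_mul_areaForm_sub z u v
  have hsq : ρ ^ 2 = ψ (‖z‖ ^ 2) := Real.sq_sqrt hψ.le
  rw [hfderiv.fderiv, ← hsq]
  simp only [add_apply, smul_apply,
    ContinuousLinearMap.smulRight_apply, ContinuousLinearMap.id_apply, innerSL_apply_apply,
    map_add, map_smul, LinearMap.add_apply, LinearMap.smul_apply, smul_eq_mul,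
    Complex.orientation.areaForm_apply_self, hswap]
  field_simp
  linear_combination ρ ^ 2 * ψ' * hplane

theorem isAreaEmbeddingOn_radialMap_one_sub_div {k : ℝ} (hk : 0 ≤ k) :
    IsAreaEmbeddingOn (radialMap fun s => 1 - k / s) {z | k < ‖z‖ ^ 2} := by
  have hpos (s : ℝ) (hs : k < s) : 0 < 1 - k / s := by
    rw [sub_pos, div_lt_one (hk.trans_lt hs)]
    exact hs
  refine ⟨injOn_radialMap (S := Ioi k) hpos fun s hs t ht h => ?_, fun z hz => ?_⟩
  · have hs0 : s ≠ 0 := (hk.trans_lt hs).ne'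
    have ht0 : t ≠ 0 := (hk.trans_lt ht).ne'
    field_simp at h
    linarith
  · have hz0 : ‖z‖ ^ 2 ≠ 0 := (hk.trans_lt hz).ne'
    have hderiv : HasDerivAt (fun s => 1 - k / s) (k / (‖z‖ ^ 2) ^ 2) (‖z‖ ^ 2) := by
      convert! ((hasDerivAt_inv hz0).const_mul k).const_sub 1 using 1
      ring
    have hfactor : 1 - k / ‖z‖ ^ 2 + ‖z‖ ^ 2 * (k / (‖z‖ ^ 2) ^ 2) = 1 := by
      field_simp
      ring
    have hsmooth : ContDiffAt ℝ ∞ (fun s : ℝ => 1 - k / s) (‖z‖ ^ 2) :=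
      contDiffAt_const.sub (contDiffAt_const.div contDiffAt_id hz0)
    have harea := hasAreaFactorAt_radialMap hsmooth hderiv (hpos _ hz)
    rwa [hfactor] at harea

theorem norm_radialMap_one_sub_div_sq {k : ℝ} (hk : 0 ≤ k) {z : ℂ} (hz : k < ‖z‖ ^ 2) :
    ‖radialMap (fun s => 1 - k / s) z‖ ^ 2 = ‖z‖ ^ 2 - k := by
  have hpos : 0 < ‖z‖ ^ 2 := hk.trans_lt hz
  rw [norm_radialMap_sq (ψ := fun s => 1 - k / s) (sub_nonneg.2 ((div_le_one hpos).2 hz.le)),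
    mul_sub, mul_one, mul_div_cancel₀ _ hpos.ne']

/-! ### Embedding discs into the cotangent bundle of the circle -/

/-- The slope `tan q` of the strip coordinate `q` of `stripMap δ`. -/
def stripSlope (δ : ℝ) (ζ : ℂ) : ℝ :=
  ζ.im / √(ζ.re ^ 2 + δ ^ 2)

/-- The diffeomorphism `p + i q` of the plane onto the strip `|q| < π / 2` given by
`tan q = stripSlope δ` and `p = ζ.re / cos q`; away from the imaginary axis `|p|` tends to `|ζ|`
as `δ → 0`. -/
def stripMap (δ : ℝ) (ζ : ℂ) : ℂ :=
  ⟨ζ.re * √(1 + stripSlope δ ζ ^ 2), Real.arctan (stripSlope δ ζ)⟩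

theorem injective_stripMap {δ : ℝ} (hδ : 0 < δ) : Function.Injective (stripMap δ) := by
  intro ζ η h
  obtain ⟨hre, him⟩ := Complex.ext_iff.1 h
  have hslope : stripSlope δ ζ = stripSlope δ η := Real.arctan_injective him
  have hX : ζ.re = η.re := by
    simp only [stripMap, hslope] at hre
    exact mul_right_cancel₀ (by positivity) hre
  refine Complex.ext hX ?_
  rw [stripSlope, stripSlope, hX] at hslope
  exact (div_left_inj' (by positivity)).1 hslope

theorem abs_re_stripMap_le (δ : ℝ) (ζ : ℂ) : |(stripMap δ ζ).re| ≤ ‖ζ‖ := by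
  refine abs_le_of_sq_le_sq ?_ (norm_nonneg ζ)
  have hfrac : ζ.re ^ 2 / (ζ.re ^ 2 + δ ^ 2) ≤ 1 := div_le_one_of_le₀ (by nlinarith) (by positivity)
  calc (stripMap δ ζ).re ^ 2
      = ζ.re ^ 2 + ζ.re ^ 2 / (ζ.re ^ 2 + δ ^ 2) * ζ.im ^ 2 := by
        rw [stripMap, stripSlope, mul_pow, Real.sq_sqrt (by positivity), div_pow,
          Real.sq_sqrt (by positivity)]
        ring
    _ ≤ ζ.re ^ 2 + ζ.im ^ 2 := by nlinarith [sq_nonneg ζ.im]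
    _ = ‖ζ‖ ^ 2 := by rw [Complex.sq_norm, Complex.normSq_apply]; ring

theorem contDiff_stripSlope {δ : ℝ} (hδ : 0 < δ) : ContDiff ℝ ∞ (stripSlope δ) :=
  Complex.imCLM.contDiff.div
    (((Complex.reCLM.contDiff.pow 2).add contDiff_const).sqrt fun ζ => by positivity)
    fun ζ => by positivity

theorem fderiv_stripSlope_I {δ : ℝ} (hδ : 0 < δ) (ζ : ℂ) :
    fderiv ℝ (stripSlope δ) ζ Complex.I = (√(ζ.re ^ 2 + δ ^ 2))⁻¹ := by
  have hslope := ((contDiff_stripSlope hδ).differentiable (by simp) ζ).hasFDerivAt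
  have hline : HasDerivAt (fun t : ℝ => ζ + t • Complex.I) Complex.I 0 := by
    simpa using ((hasDerivAt_id (0 : ℝ)).smul_const Complex.I).const_add ζ
  refine (HasFDerivAt.comp_hasDerivAt 0 (by simpa using hslope) hline).unique ?_
  simpa [Function.comp_def, stripSlope] using
    ((hasDerivAt_id (0 : ℝ)).const_add ζ.im).div_const (√(ζ.re ^ 2 + δ ^ 2))

/- Only the derivative of the slope across the strip enters: `dp ∧ dq = (1 + τ²)^(-1/2) dX ∧ dτ`
for `τ = tan q`. -/
theorem hasAreaFactorAt_stripMap {δ : ℝ} (hδ : 0 < δ) (ζ : ℂ) :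
    HasAreaFactorAt (stripMap δ) (√(‖ζ‖ ^ 2 + δ ^ 2))⁻¹ ζ := by
  have hsmooth := (contDiff_stripSlope hδ).contDiffAt (x := ζ)
  have hslope := (hsmooth.differentiableAt (by simp)).hasFDerivAt
  have hslopeI := fderiv_stripSlope_I hδ ζ
  have hnorm : ‖ζ‖ ^ 2 + δ ^ 2 = (ζ.re ^ 2 + δ ^ 2) * (1 + stripSlope δ ζ ^ 2) := by
    rw [Complex.sq_norm, Complex.normSq_apply, stripSlope, div_pow, Real.sq_sqrt (by positivity)]
    field_simp
    ring
  have hpos : 1 + stripSlope δ ζ ^ 2 ≠ 0 := by positivity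
  have hre := Complex.reCLM.hasFDerivAt.mul
    (((hslope.pow 2).const_add 1).sqrt (by simpa using hpos))
  have him := hslope.arctan
  have hg : ContDiffAt ℝ ∞ (stripMap δ) ζ := contDiffAt_of_re_im
    (Complex.reCLM.contDiff.contDiffAt.mul ((contDiffAt_const.add (hsmooth.pow 2)).sqrt hpos))
    hsmooth.arctan
  convert hasAreaFactorAt_of_re_im hg hre him using 1
  rw [hnorm, Real.sqrt_mul (by positivity), mul_inv, ← hslopeI]
  have hsq : √(1 + stripSlope δ ζ ^ 2) ^ 2 = 1 + stripSlope δ ζ ^ 2 := Real.sq_sqrt (by positivity)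
  have hs0 : √(1 + stripSlope δ ζ ^ 2) ≠ 0 := by positivity
  simp only [Complex.reCLM_apply, one_div, mul_inv_rev, Nat.add_one_sub_one, pow_one, nsmul_eq_mul,
    Nat.cast_ofNat, add_apply, smul_apply, smul_eq_mul, Complex.one_re, mul_one, Complex.I_re,
    mul_zero, add_zero]
  field_simp
  rw [hsq]
  ring

/-- A symplectic embedding of the plane into the strip `|q| < π / 2` whose momentum `p` is
bounded by the action `|z|² / 2` up to the error `δ`. In the limit `δ → 0` it takes the disc
`|z|² < s` to the rectangle `|p| < s / 2` of the same area. -/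
def discToStrip (δ : ℝ) : ℂ → ℂ :=
  stripMap δ ∘ radialMap fun s => s / 4 + δ

theorem norm_radialMap_sq_add_sq {δ : ℝ} (hδ : 0 ≤ δ) (z : ℂ) :
    ‖radialMap (fun s => s / 4 + δ) z‖ ^ 2 + δ ^ 2 = (‖z‖ ^ 2 / 2 + δ) ^ 2 := by
  rw [norm_radialMap_sq (by positivity)]
  ring

theorem isAreaEmbeddingOn_discToStrip {δ : ℝ} (hδ : 0 < δ) :
    IsAreaEmbeddingOn (discToStrip δ) univ := by
  refine ⟨?_, fun z _ => ?_⟩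
  · have hinj : InjOn (fun s : ℝ => s * (s / 4 + δ)) (Ici 0) := by
      intro s hs t ht h
      rw [mem_Ici] at hs ht
      have hfactor : (s - t) * ((s + t) / 4 + δ) = 0 := by linear_combination h
      exact sub_eq_zero.1 ((mul_eq_zero.1 hfactor).resolve_right (by positivity))
    have hradial := injOn_radialMap (fun s (hs : 0 ≤ s) => show 0 < s / 4 + δ by positivity) hinj
    exact (injective_stripMap hδ).comp_injOn
      (hradial.mono fun z _ => sq_nonneg ‖z‖)
  · have hradial : HasAreaFactorAt (radialMap fun s => s / 4 + δ) _ z :=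
      hasAreaFactorAt_radialMap (by fun_prop) (((hasDerivAt_id _).div_const 4).add_const δ)
        (by positivity)
    have harea := (hasAreaFactorAt_stripMap hδ _).comp hradial
    have hfactor : (‖z‖ ^ 2 / 2 + δ)⁻¹ * (‖z‖ ^ 2 / 4 + δ + ‖z‖ ^ 2 * (1 / 4)) = 1 := by
      field_simp
      ring
    rwa [norm_radialMap_sq_add_sq hδ.le, Real.sqrt_sq (by positivity), hfactor] at harea

theorem abs_re_discToStrip_le {δ : ℝ} (hδ : 0 ≤ δ) (z : ℂ) :
    |(discToStrip δ z).re| ≤ ‖z‖ ^ 2 / 2 + δ := by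
  refine (abs_re_stripMap_le δ _).trans (le_of_sq_le_sq ?_ (by positivity))
  rw [← norm_radialMap_sq_add_sq hδ]
  exact le_add_of_nonneg_right (sq_nonneg δ)

theorem im_discToStrip_mem_Ioo (δ : ℝ) (z : ℂ) :
    (discToStrip δ z).im ∈ Ioo (-(Real.pi / 2)) (Real.pi / 2) :=
  Real.arctan_mem_Ioo _

/-- Symplectic polar coordinates: the strip point `p + i q` goes to the point of the plane with
squared radius `k + p` and argument `2 * q`. -/
def polarMap (k : ℝ) (ζ : ℂ) : ℂ :=
  Complex.polarCoord.symm (√(k + ζ.re), 2 * ζ.im)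

theorem norm_polarMap_sq {k : ℝ} {ζ : ℂ} (h : 0 ≤ k + ζ.re) : ‖polarMap k ζ‖ ^ 2 = k + ζ.re := by
  rw [polarMap, Complex.norm_polarCoord_symm, sq_abs, Real.sq_sqrt h]

theorem re_polarMap (k : ℝ) (ζ : ℂ) : (polarMap k ζ).re = √(k + ζ.re) * Real.cos (2 * ζ.im) := by
  simp [polarMap, Complex.polarCoord_symm_apply, -Complex.ofReal_cos, -Complex.ofReal_sin]

theorem im_polarMap (k : ℝ) (ζ : ℂ) : (polarMap k ζ).im = √(k + ζ.re) * Real.sin (2 * ζ.im) := by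
  simp [polarMap, Complex.polarCoord_symm_apply, -Complex.ofReal_cos, -Complex.ofReal_sin]

theorem contDiffAt_polarMap {k : ℝ} {ζ : ℂ} (h : 0 < k + ζ.re) :
    ContDiffAt ℝ ∞ (polarMap k) ζ := by
  have hradius : ContDiffAt ℝ ∞ (fun w : ℂ => √(k + w.re)) ζ :=
    (contDiffAt_const.add Complex.reCLM.contDiff.contDiffAt).sqrt h.ne'
  have hangle : ContDiffAt ℝ ∞ (fun w : ℂ => 2 * w.im) ζ :=
    contDiffAt_const.mul Complex.imCLM.contDiff.contDiffAt
  exact contDiffAt_of_re_im (by simpa only [re_polarMap] using hradius.mul hangle.cos)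
    (by simpa only [im_polarMap] using hradius.mul hangle.sin)

theorem hasAreaFactorAt_polarMap {k : ℝ} {ζ : ℂ} (h : 0 < k + ζ.re) :
    HasAreaFactorAt (polarMap k) 1 ζ := by
  have hradius := ((Complex.reCLM.hasFDerivAt (x := ζ)).const_add k).sqrt h.ne'
  have hangle := (Complex.imCLM.hasFDerivAt (x := ζ)).const_mul (2 : ℝ)
  have hre := (hradius.mul hangle.cos).congr_of_eventuallyEq (.of_forall (re_polarMap k))
  have him := (hradius.mul hangle.sin).congr_of_eventuallyEq (.of_forall (im_polarMap k))
  convert hasAreaFactorAt_of_re_im (contDiffAt_polarMap h) hre him using 1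
  have hr0 : √(k + ζ.re) ≠ 0 := (Real.sqrt_pos.2 h).ne'
  simp only [Complex.reCLM_apply, Complex.imCLM_apply, one_div, mul_inv_rev, add_apply, smul_apply,
    Complex.one_im, smul_eq_mul, mul_zero, Complex.one_re, mul_one, zero_add, Complex.I_im,
    Complex.I_re, add_zero, neg_mul, mul_neg, sub_neg_eq_add]
  field_simp
  exact (Real.cos_sq_add_sin_sq _).symm

theorem isAreaEmbeddingOn_polarMap (k : ℝ) :
    IsAreaEmbeddingOn (polarMap k)
      {ζ | 0 < k + ζ.re ∧ ζ.im ∈ Ioo (-(Real.pi / 2)) (Real.pi / 2)} := by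
  refine ⟨fun ζ ⟨hζ, hζ'⟩ η ⟨hη, hη'⟩ h => ?_, fun ζ hζ => hasAreaFactorAt_polarMap hζ.1⟩
  have hmem (w : ℂ) (hw : 0 < k + w.re) (hw' : w.im ∈ Ioo (-(Real.pi / 2)) (Real.pi / 2)) :
      (√(k + w.re), 2 * w.im) ∈ Complex.polarCoord.target :=
    ⟨Real.sqrt_pos.2 hw, by linarith [hw'.1], by linarith [hw'.2]⟩
  obtain ⟨hr, ht⟩ := Prod.ext_iff.1
    (Complex.polarCoord.symm.injOn (hmem ζ hζ hζ') (hmem η hη hη') h)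
  have hr' := (Real.sqrt_inj hζ.le hη.le).1 hr
  exact Complex.ext (by linarith) (by linarith)

/-! ### Capacity bounds -/

theorem stdSymp4_eq_areaForm (u v : ℂ × ℂ) : stdSymp4 u v = Ω u.1 v.1 + Ω u.2 v.2 := by
  rw [stdSymp4, Complex.areaForm, Complex.areaForm]

theorem symplecticEmbeds4_of_prodMap {U V : Set (ℂ × ℂ)} {g₁ g₂ : ℂ → ℂ} {S₁ S₂ : Set ℂ}
    (hU : IsOpen U) (h₁ : IsAreaEmbeddingOn g₁ S₁) (h₂ : IsAreaEmbeddingOn g₂ S₂)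
    (hUS : U ⊆ S₁ ×ˢ S₂) (hmaps : MapsTo (Prod.map g₁ g₂) U V) : SymplecticEmbeds4 U V := by
  refine ⟨Prod.map g₁ g₂, fun z hz => ?_, (h₁.injOn.prodMap h₂.injOn).mono hUS, hmaps,
    fun z hz u v => ?_⟩
  · exact ((h₁.hasAreaFactorAt _ (hUS hz).1).1.prodMap'
      (h₂.hasAreaFactorAt _ (hUS hz).2).1).contDiffWithinAt
  · obtain ⟨hsmooth₁, harea₁⟩ := h₁.hasAreaFactorAt _ (hUS hz).1
    obtain ⟨hsmooth₂, harea₂⟩ := h₂.hasAreaFactorAt _ (hUS hz).2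
    have hderiv := (hsmooth₁.differentiableAt (by simp)).hasFDerivAt.prodMap z
      (hsmooth₂.differentiableAt (by simp)).hasFDerivAt
    rw [fderivWithin_of_isOpen hU hz, hderiv.fderiv, stdSymp4_eq_areaForm, stdSymp4_eq_areaForm]
    simp only [ContinuousLinearMap.coe_prodMap', Prod.map_fst, Prod.map_snd, harea₁, harea₂,
      one_mul]

theorem symplecticEmbeds4_preimage_swap {U : Set (ℂ × ℂ)} (hU : IsOpen U) :
    SymplecticEmbeds4 U (Prod.swap ⁻¹' U) := by
  let e := ContinuousLinearEquiv.prodComm ℝ ℂ ℂ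
  refine ⟨e, e.contDiff.contDiffOn, e.injective.injOn, fun z hz => hz, fun z hz u v => ?_⟩
  rw [fderivWithin_of_isOpen hU hz, e.fderiv]
  exact add_comm _ _

theorem isOpen_ball4 (r : ℝ) : IsOpen (ball4 r) :=
  isOpen_lt ((Complex.continuous_normSq.comp continuous_fst).add
    (Complex.continuous_normSq.comp continuous_snd)) continuous_const

theorem continuous_mu4 : Continuous mu4 :=
  (continuous_const.mul (Complex.continuous_normSq.comp continuous_fst)).prodMk
    (continuous_const.mul (Complex.continuous_normSq.comp continuous_snd))

theorem symplecticEmbeds4_cyl4_of_norm_sq_mem_Ioo {U : Set (ℂ × ℂ)} {k r : ℝ} (hU : IsOpen U)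
    (hk : 0 ≤ k) (h : ∀ z ∈ U, ‖z.1‖ ^ 2 ∈ Ioo k (k + r ^ 2)) : SymplecticEmbeds4 U (cyl4 r) := by
  refine symplecticEmbeds4_of_prodMap hU (isAreaEmbeddingOn_radialMap_one_sub_div hk)
    (isAreaEmbeddingOn_id univ) (fun z hz => ⟨(h z hz).1, mem_univ _⟩) fun z hz => ?_
  obtain ⟨hlower, hupper⟩ := h z hz
  rw [cyl4, mem_ofPred_eq, Complex.normSq_eq_norm_sq, Prod.map_fst,
    norm_radialMap_one_sub_div_sq hk hlower]
  linarith

/-- The open ball of radius `m` about `0` for the `ℓ¹` norm of the plane: the momenta attained on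
a ball of capacity `2 * m` when each factor of `ℂ²` is embedded as in `discToStrip`. -/
def diamond (m : ℝ) : Set (ℝ × ℝ) :=
  {x | |x.1| + |x.2| < m}

theorem isOpen_diamond (m : ℝ) : IsOpen (diamond m) :=
  isOpen_lt (by fun_prop) continuous_const

theorem mul_re_discToStrip_mem_diamond {δ m r : ℝ} (hδ : 0 ≤ δ)
    (hm : Real.pi * r ^ 2 / 2 + 2 * Real.pi * δ ≤ m) {z : ℂ × ℂ} (hz : z ∈ ball4 r) :
    (Real.pi * (discToStrip δ z.1).re, Real.pi * (discToStrip δ z.2).re) ∈ diamond m := by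
  rw [ball4, mem_ofPred_eq, Complex.normSq_eq_norm_sq, Complex.normSq_eq_norm_sq] at hz
  have hp₁ := abs_re_discToStrip_le hδ z.1
  have hp₂ := abs_re_discToStrip_le hδ z.2
  simp only [diamond, mem_ofPred_eq, abs_mul, abs_of_pos Real.pi_pos]
  nlinarith [Real.pi_pos]

theorem isAreaEmbeddingOn_polarMap_comp_discToStrip {δ : ℝ} (hδ : 0 < δ) (k : ℝ) :
    IsAreaEmbeddingOn (polarMap k ∘ discToStrip δ) {z | 0 < k + (discToStrip δ z).re} :=
  (isAreaEmbeddingOn_polarMap k).comp ((isAreaEmbeddingOn_discToStrip hδ).mono (subset_univ _))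
    fun z hz => ⟨hz, im_discToStrip_mem_Ioo δ z⟩

theorem symplecticEmbeds4_ball4_of_diamond_subset {W : Set (ℝ × ℝ)} {v : ℝ × ℝ} {m r : ℝ}
    (hr : Real.pi * r ^ 2 < 2 * m) (hW : diamond m ⊆ W)
    (hv : ∀ x ∈ W, 0 < x.1 + v.1 ∧ 0 < x.2 + v.2) :
    SymplecticEmbeds4 (ball4 r) (mu4 ⁻¹' ((fun x => x + v) '' W)) := by
  have hπ := Real.pi_pos
  obtain ⟨δ, hδ, hδm⟩ : ∃ δ, 0 < δ ∧ Real.pi * r ^ 2 / 2 + 2 * Real.pi * δ ≤ m := by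
    refine ⟨(m - Real.pi * r ^ 2 / 2) / (2 * Real.pi), div_pos (by linarith) (by positivity), ?_⟩
    field_simp
    linarith
  have hmem (z : ℂ × ℂ) (hz : z ∈ ball4 r) := hW (mul_re_discToStrip_mem_diamond hδ.le hδm hz)
  have hrescale (p w : ℝ) : w / Real.pi + p = (Real.pi * p + w) / Real.pi := by
    field_simp
    ring
  have hpos (z : ℂ × ℂ) (hz : z ∈ ball4 r) : 0 < v.1 / Real.pi + (discToStrip δ z.1).re ∧
      0 < v.2 / Real.pi + (discToStrip δ z.2).re := by
    rw [hrescale, hrescale]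
    exact (hv _ (hmem z hz)).imp (div_pos · hπ) (div_pos · hπ)
  refine symplecticEmbeds4_of_prodMap (isOpen_ball4 r)
    (isAreaEmbeddingOn_polarMap_comp_discToStrip hδ (v.1 / Real.pi))
    (isAreaEmbeddingOn_polarMap_comp_discToStrip hδ (v.2 / Real.pi)) hpos
    fun z hz => ⟨_, hmem z hz, ?_⟩
  simp only [mu4, Complex.normSq_eq_norm_sq, Prod.map_fst, Prod.map_snd, Function.comp_apply,
    norm_polarMap_sq (hpos z hz).1.le, norm_polarMap_sq (hpos z hz).2.le, hrescale,
    mul_div_cancel₀ _ hπ.ne']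
  rfl

section Capacity

variable {c : Set (ℂ × ℂ) → ℝ≥0∞} (hmono : ∀ U V, SymplecticEmbeds4 U V → c U ≤ c V)

include hmono

theorem capacity_le_of_mu4_fst_mem_Ioo
    (hcyl : ∀ r : ℝ, 0 < r → c (cyl4 r) ≤ ENNReal.ofReal (Real.pi * r ^ 2))
    {U : Set (ℂ × ℂ)} (hU : IsOpen U) {s t : ℝ} (hs : 0 ≤ s) (ht : 0 < t)
    (h : ∀ z ∈ U, (mu4 z).1 ∈ Ioo s (s + t)) : c U ≤ ENNReal.ofReal t := by
  have hπ := Real.pi_pos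
  have hr : √(t / Real.pi) ^ 2 = t / Real.pi := Real.sq_sqrt (by positivity)
  have hembed : SymplecticEmbeds4 U (cyl4 √(t / Real.pi)) := by
    refine symplecticEmbeds4_cyl4_of_norm_sq_mem_Ioo (k := s / Real.pi) hU (by positivity)
      fun z hz => ?_
    have hz' := h z hz
    rw [mu4, Complex.normSq_eq_norm_sq] at hz'
    rw [hr, ← add_div]
    exact ⟨(div_lt_iff₀' hπ).2 hz'.1, (lt_div_iff₀' hπ).2 hz'.2⟩
  calc c U ≤ c (cyl4 √(t / Real.pi)) := hmono _ _ hembed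
    _ ≤ ENNReal.ofReal (Real.pi * √(t / Real.pi) ^ 2) := hcyl _ (by positivity)
    _ = ENNReal.ofReal t := by rw [hr, mul_div_cancel₀ _ hπ.ne']

theorem capacity_le_of_mu4_snd_mem_Ioo
    (hcyl : ∀ r : ℝ, 0 < r → c (cyl4 r) ≤ ENNReal.ofReal (Real.pi * r ^ 2))
    {U : Set (ℂ × ℂ)} (hU : IsOpen U) {s t : ℝ} (hs : 0 ≤ s) (ht : 0 < t)
    (h : ∀ z ∈ U, (mu4 z).2 ∈ Ioo s (s + t)) : c U ≤ ENNReal.ofReal t :=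
  (hmono _ _ (symplecticEmbeds4_preimage_swap hU)).trans
    (capacity_le_of_mu4_fst_mem_Ioo hmono hcyl (hU.preimage continuous_swap) hs ht
      fun z hz => h z.swap hz)

theorem ofReal_le_capacity_of_forall_ball4_embeds
    (hball : ∀ r : ℝ, 0 < r → ENNReal.ofReal (Real.pi * r ^ 2) ≤ c (ball4 r))
    {V : Set (ℂ × ℂ)} {w : ℝ}
    (h : ∀ r : ℝ, 0 < r → Real.pi * r ^ 2 < w → SymplecticEmbeds4 (ball4 r) V) :
    ENNReal.ofReal w ≤ c V := by
  refine le_of_forall_lt fun d hd => ?_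
  obtain ⟨t, hdt, htw⟩ := exists_between hd
  have ht_top : t ≠ ⊤ := htw.ne_top
  have ht_pos : 0 < t.toReal := ENNReal.toReal_pos hdt.ne_bot ht_top
  have hr_pos : 0 < √(t.toReal / Real.pi) := by positivity
  have hr : Real.pi * √(t.toReal / Real.pi) ^ 2 = t.toReal := by
    rw [Real.sq_sqrt (by positivity), mul_div_cancel₀ _ Real.pi_ne_zero]
  calc d < t := hdt
    _ = ENNReal.ofReal (Real.pi * √(t.toReal / Real.pi) ^ 2) := by
        rw [hr, ENNReal.ofReal_toReal ht_top]
    _ ≤ c (ball4 √(t.toReal / Real.pi)) := hball _ hr_pos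
    _ ≤ c V := hmono _ _ (h _ hr_pos (hr.trans_lt ((ENNReal.lt_ofReal_iff_toReal_lt ht_top).1 htw)))

end Capacity

theorem le_of_diamond_subset {W : Set (ℝ × ℝ)} {v : ℝ × ℝ} {m : ℝ} (hm : 0 < m)
    (hW : diamond m ⊆ W) (hv : ∀ x ∈ W, 0 < x.1 + v.1 ∧ 0 < x.2 + v.2) : m ≤ v.1 ∧ m ≤ v.2 := by
  have hzero := hv (0, 0) (hW (by simpa [diamond] using hm))
  simp only [zero_add] at hzero
  constructor <;> by_contra! hlt
  · have hmem : (-v.1, 0) ∈ diamond m := by simpa [diamond, abs_of_pos hzero.1] using hlt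
    simpa using (hv _ (hW hmem)).1
  · have hmem : (0, -v.2) ∈ diamond m := by simpa [diamond, abs_of_pos hzero.2] using hlt
    simpa using (hv _ (hW hmem)).2

theorem capacity_eq_of_diamond_subset {c : Set (ℂ × ℂ) → ℝ≥0∞}
    (hmono : ∀ U V, SymplecticEmbeds4 U V → c U ≤ c V)
    (hball : ∀ r : ℝ, 0 < r → ENNReal.ofReal (Real.pi * r ^ 2) ≤ c (ball4 r))
    (hcyl : ∀ r : ℝ, 0 < r → c (cyl4 r) ≤ ENNReal.ofReal (Real.pi * r ^ 2))
    {W : Set (ℝ × ℝ)} (hWopen : IsOpen W) {m : ℝ} (hm : 0 < m) (hdiamond : diamond m ⊆ W)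
    (hstrip : (∀ x ∈ W, |x.1| < m) ∨ ∀ x ∈ W, |x.2| < m) {v : ℝ × ℝ}
    (hv : ∀ x ∈ W, 0 < x.1 + v.1 ∧ 0 < x.2 + v.2) :
    c (mu4 ⁻¹' ((fun x => x + v) '' W)) = ENNReal.ofReal (2 * m) := by
  have hopen : IsOpen (mu4 ⁻¹' ((fun x => x + v) '' W)) :=
    (isOpenMap_add_right v W hWopen).preimage continuous_mu4
  obtain ⟨hv₁, hv₂⟩ := le_of_diamond_subset hm hdiamond hv
  refine le_antisymm ?_ (ofReal_le_capacity_of_forall_ball4_embeds hmono hball fun r _ hr =>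
    symplecticEmbeds4_ball4_of_diamond_subset hr hdiamond hv)
  rcases hstrip with hfst | hsnd
  · refine capacity_le_of_mu4_fst_mem_Ioo hmono hcyl hopen (sub_nonneg.2 hv₁) (by positivity) ?_
    rintro z ⟨x, hx, hxz⟩
    obtain ⟨hlower, hupper⟩ := abs_lt.1 (hfst x hx)
    rw [← hxz]
    constructor <;> simp only [Prod.fst_add] <;> linarith
  · refine capacity_le_of_mu4_snd_mem_Ioo hmono hcyl hopen (sub_nonneg.2 hv₂) (by positivity) ?_
    rintro z ⟨x, hx, hxz⟩
    obtain ⟨hlower, hupper⟩ := abs_lt.1 (hsnd x hx)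
    rw [← hxz]
    constructor <;> simp only [Prod.snd_add] <;> linarith

/-! ### Axis-symmetric convex sets -/

theorem isLUB_le_of_forall_mul_le_of_one_le_abs {S : Set ℝ} {a p B : ℝ} (ha : IsLUB S a)
    (hneg : ∀ t ∈ S, -t ∈ S) (hp : 1 ≤ |p|) (hB : ∀ t ∈ S, p * t ≤ B) : a ≤ B := by
  refine ha.2 fun t ht => ?_
  have hnegB : -(p * t) ≤ B := mul_neg p t ▸ hB (-t) (hneg t ht)
  calc t ≤ |t| := le_abs_self t
    _ ≤ |p * t| := by
        rw [abs_mul]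
        exact le_mul_of_one_le_left (abs_nonneg t) hp
    _ ≤ B := abs_le'.2 ⟨hB t ht, hnegB⟩

/-- The planar set `A` is symmetric with respect to both coordinate axes. -/
structure IsAxisSymmetric (A : Set (ℝ × ℝ)) : Prop where
  neg_fst : ∀ x ∈ A, (-x.1, x.2) ∈ A
  neg_snd : ∀ x ∈ A, (x.1, -x.2) ∈ A

namespace IsAxisSymmetric

variable {A : Set (ℝ × ℝ)} {a b : ℝ} (hsym : IsAxisSymmetric A)

include hsym

theorem mem_of_abs_le (hconv : Convex ℝ A) {x y : ℝ × ℝ} (hx : x ∈ A)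
    (h₁ : |y.1| ≤ |x.1|) (h₂ : |y.2| ≤ |x.2|) : y ∈ A := by
  have mem_segment {s t : ℝ} (h : |t| ≤ |s|) : t ∈ segment ℝ (-s) s := by
    rw [segment_eq_uIcc, mem_uIcc]
    rcases abs_cases s with ⟨hs, -⟩ | ⟨hs, -⟩ <;> rw [hs, abs_le] at h <;> grind
  have hfst : (y.1, x.2) ∈ A := hconv.segment_subset (hsym.neg_fst x hx) hx <| by
    rw [← Prod.mk.eta (p := x), ← Prod.image_mk_segment_left]
    exact mem_image_of_mem _ (mem_segment h₁)
  refine hconv.segment_subset (hsym.neg_snd _ hfst) hfst ?_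
  rw [← Prod.image_mk_segment_right]
  exact mem_image_of_mem _ (mem_segment h₂)

theorem abs_fst_le (hconv : Convex ℝ A) (ha : IsLUB {x : ℝ | (x, (0 : ℝ)) ∈ A} a) {x : ℝ × ℝ}
    (hx : x ∈ A) : |x.1| ≤ a :=
  ha.1 (hsym.mem_of_abs_le hconv hx (abs_abs _).le (by simp))

theorem abs_snd_le (hconv : Convex ℝ A) (hb : IsLUB {y : ℝ | ((0 : ℝ), y) ∈ A} b) {x : ℝ × ℝ}
    (hx : x ∈ A) : |x.2| ≤ b :=
  hb.1 (hsym.mem_of_abs_le hconv hx (by simp) (abs_abs _).le)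

theorem abs_fst_lt (hconv : Convex ℝ A) (ha : IsLUB {x : ℝ | (x, (0 : ℝ)) ∈ A} a) {x : ℝ × ℝ}
    (hx : x ∈ interior A) : |x.1| < a := by
  have hstrip : A ⊆ Icc (-a) a ×ˢ univ :=
    fun y hy => ⟨abs_le.1 (hsym.abs_fst_le hconv ha hy), mem_univ _⟩
  have hx' := interior_mono hstrip hx
  rw [interior_prod_eq, interior_Icc] at hx'
  exact abs_lt.2 hx'.1

theorem abs_snd_lt (hconv : Convex ℝ A) (hb : IsLUB {y : ℝ | ((0 : ℝ), y) ∈ A} b) {x : ℝ × ℝ}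
    (hx : x ∈ interior A) : |x.2| < b := by
  have hstrip : A ⊆ univ ×ˢ Icc (-b) b :=
    fun y hy => ⟨mem_univ _, abs_le.1 (hsym.abs_snd_le hconv hb hy)⟩
  have hx' := interior_mono hstrip hx
  rw [interior_prod_eq, interior_Icc] at hx'
  exact abs_lt.2 hx'.2

theorem mk_zero_mem (hconv : Convex ℝ A) (ha : IsLUB {x : ℝ | (x, (0 : ℝ)) ∈ A} a) {t : ℝ}
    (ht : |t| < a) : (t, 0) ∈ A := by
  obtain ⟨s, hs, hts⟩ := (lt_isLUB_iff ha).1 ht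
  exact hsym.mem_of_abs_le hconv hs (hts.le.trans (le_abs_self s)) le_rfl

theorem zero_mk_mem (hconv : Convex ℝ A) (hb : IsLUB {y : ℝ | ((0 : ℝ), y) ∈ A} b) {t : ℝ}
    (ht : |t| < b) : (0, t) ∈ A := by
  obtain ⟨s, hs, hts⟩ := (lt_isLUB_iff hb).1 ht
  exact hsym.mem_of_abs_le hconv hs le_rfl (hts.le.trans (le_abs_self s))

theorem diamond_subset_interior (hconv : Convex ℝ A)
    (ha : IsLUB {x : ℝ | (x, (0 : ℝ)) ∈ A} a) (hb : IsLUB {y : ℝ | ((0 : ℝ), y) ∈ A} b) :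
    diamond (min a b) ⊆ interior A := by
  refine interior_maximal (fun x hx => ?_) (isOpen_diamond _)
  obtain ⟨s, hxs, hs⟩ := exists_between (show |x.1| + |x.2| < min a b from hx)
  have hs0 : 0 < s := (add_nonneg (abs_nonneg _) (abs_nonneg _)).trans_lt hxs
  have hx₁ : |x.1| ≤ s := (le_add_of_nonneg_right (abs_nonneg _)).trans hxs.le
  have hedge : (|x.1|, s - |x.1|) ∈ A := by
    have hcomb := hconv
      (hsym.mk_zero_mem hconv ha ((abs_of_pos hs0).trans_lt (hs.trans_le (min_le_left a b))))
      (hsym.zero_mk_mem hconv hb ((abs_of_pos hs0).trans_lt (hs.trans_le (min_le_right a b))))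
      (a := |x.1| / s) (b := 1 - |x.1| / s) (by positivity)
      (sub_nonneg.2 ((div_le_one hs0).2 hx₁)) (add_sub_cancel _ _)
    simpa [sub_mul, hs0.ne'] using hcomb
  refine hsym.mem_of_abs_le hconv hedge (abs_abs _).ge ?_
  rw [abs_of_nonneg (sub_nonneg.2 hx₁)]
  linarith

theorem bddAbove_image_linear (hconv : Convex ℝ A) (ha : IsLUB {x : ℝ | (x, (0 : ℝ)) ∈ A} a)
    (hb : IsLUB {y : ℝ | ((0 : ℝ), y) ∈ A} b) (p q : ℝ) :
    BddAbove ((fun x : ℝ × ℝ => p * x.1 + q * x.2) '' A) := by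
  refine ⟨|p| * a + |q| * b, forall_mem_image.2 fun x hx => ?_⟩
  calc p * x.1 + q * x.2 ≤ |p| * |x.1| + |q| * |x.2| := by
        rw [← abs_mul, ← abs_mul]
        exact add_le_add (le_abs_self _) (le_abs_self _)
    _ ≤ |p| * a + |q| * b := by
        gcongr
        exacts [hsym.abs_fst_le hconv ha hx, hsym.abs_snd_le hconv hb hx]

theorem isLUB_image_fst (hconv : Convex ℝ A) (ha : IsLUB {x : ℝ | (x, (0 : ℝ)) ∈ A} a) :
    IsLUB (Prod.fst '' A) a :=
  ⟨forall_mem_image.2 fun _ hx => (le_abs_self _).trans (hsym.abs_fst_le hconv ha hx),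
    fun _ hB => ha.2 fun _ hx => hB ⟨_, hx, rfl⟩⟩

theorem isLUB_image_snd (hconv : Convex ℝ A) (hb : IsLUB {y : ℝ | ((0 : ℝ), y) ∈ A} b) :
    IsLUB (Prod.snd '' A) b :=
  ⟨forall_mem_image.2 fun _ hx => (le_abs_self _).trans (hsym.abs_snd_le hconv hb hx),
    fun _ hB => hb.2 fun _ hy => hB ⟨_, hy, rfl⟩⟩

theorem isLeast_sSup_linear (hconv : Convex ℝ A) (hne : A.Nonempty)
    (ha : IsLUB {x : ℝ | (x, (0 : ℝ)) ∈ A} a) (hb : IsLUB {y : ℝ | ((0 : ℝ), y) ∈ A} b) :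
    IsLeast
      {t : ℝ | ∃ m : ℤ × ℤ, m ≠ 0 ∧
        t = sSup ((fun x : ℝ × ℝ => (m.1 : ℝ) * x.1 + (m.2 : ℝ) * x.2) '' A)}
      (min a b) := by
  refine ⟨?_, ?_⟩
  · rcases min_choice a b with hmin | hmin <;> rw [hmin]
    · refine ⟨(1, 0), by simp, ?_⟩
      simpa using ((hsym.isLUB_image_fst hconv ha).csSup_eq (hne.image _)).symm
    · refine ⟨(0, 1), by simp, ?_⟩
      simpa using ((hsym.isLUB_image_snd hconv hb).csSup_eq (hne.image _)).symm
  · rintro t ⟨m, hm, rfl⟩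
    have hB := (isLUB_csSup (hne.image _) (hsym.bddAbove_image_linear hconv ha hb m.1 m.2)).1
    have one_le_abs {n : ℤ} (hn : n ≠ 0) : (1 : ℝ) ≤ |(n : ℝ)| := mod_cast Int.one_le_abs hn
    by_cases hm₁ : m.1 = 0
    · have hm₂ : m.2 ≠ 0 := fun h => hm (Prod.ext hm₁ h)
      exact (min_le_right a b).trans (isLUB_le_of_forall_mul_le_of_one_le_abs hb
        (fun _ => hsym.neg_snd _) (one_le_abs hm₂)
        fun t ht => by simpa using hB (mem_image_of_mem _ ht))
    · exact (min_le_left a b).trans (isLUB_le_of_forall_mul_le_of_one_le_abs ha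
        (fun _ => hsym.neg_fst _) (one_le_abs hm₁)
        fun t ht => by simpa using hB (mem_image_of_mem _ ht))

end IsAxisSymmetric

theorem capacity_axis_symmetric_codisc_general {A : Set (ℝ × ℝ)} (hconv : Convex ℝ A)
    (hint : (interior A).Nonempty) (hsym : IsAxisSymmetric A) {a b : ℝ}
    (ha : IsLUB {x : ℝ | (x, (0 : ℝ)) ∈ A} a) (hb : IsLUB {y : ℝ | ((0 : ℝ), y) ∈ A} b) :
    IsLeast
      {t : ℝ | ∃ m : ℤ × ℤ, m ≠ 0 ∧
        t = sSup ((fun x : ℝ × ℝ => (m.1 : ℝ) * x.1 + (m.2 : ℝ) * x.2) '' A)}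
      (min a b) ∧
    ∀ v : ℝ × ℝ, (∀ x ∈ interior A, 0 < x.1 + v.1 ∧ 0 < x.2 + v.2) →
      ∀ c : Set (ℂ × ℂ) → ℝ≥0∞, (∀ U V, SymplecticEmbeds4 U V → c U ≤ c V) →
        (∀ r : ℝ, 0 < r → ENNReal.ofReal (Real.pi * r ^ 2) ≤ c (ball4 r)) →
        (∀ r : ℝ, 0 < r → c (cyl4 r) ≤ ENNReal.ofReal (Real.pi * r ^ 2)) →
        c (mu4 ⁻¹' ((fun x => x + v) '' interior A)) = ENNReal.ofReal (2 * min a b) := by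
  refine ⟨hsym.isLeast_sSup_linear hconv (hint.mono interior_subset) ha hb,
    fun v hv c hmono hball hcyl => ?_⟩
  have hfst (x : ℝ × ℝ) (hx : x ∈ interior A) : |x.1| < a := hsym.abs_fst_lt hconv ha hx
  have hsnd (x : ℝ × ℝ) (hx : x ∈ interior A) : |x.2| < b := hsym.abs_snd_lt hconv hb hx
  obtain ⟨x, hx⟩ := hint
  have hpos : 0 < min a b :=
    lt_min ((abs_nonneg _).trans_lt (hfst x hx)) ((abs_nonneg _).trans_lt (hsnd x hx))
  exact capacity_eq_of_diamond_subset hmono hball hcyl isOpen_interior hpos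
    (hsym.diamond_subset_interior hconv ha hb)
    ((min_choice a b).imp (fun h x hx => (hfst x hx).trans_eq h.symm)
      fun h x hx => (hsnd x hx).trans_eq h.symm) hv

/-- Let `A ⊂ ℝ²` be compact convex with nonempty interior, symmetric w.r.t. both
coordinate axes, and let `a` (resp. `b`) be the largest `x` with `(x,0) ∈ A` (resp.
largest `y` with `(0,y) ∈ A`).  Then the minimum over `m ∈ ℤ² ∖ {0}` of the support
function `sup_{x∈A} ⟨m,x⟩` is attained and equals `min a b`, and for every translate
of `interior A` into the open positive quadrant, every normalized symplectic capacity
of `μ⁻¹(interior A + v)` equals `2·min(a,b)`. -/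
theorem capacity_axis_symmetric_codisc
    (A : Set (ℝ × ℝ)) (hAcomp : IsCompact A) (hAconv : Convex ℝ A)
    (hAint : (interior A).Nonempty)
    (hsymx : ∀ x ∈ A, (-(x : ℝ × ℝ).1, x.2) ∈ A)
    (hsymy : ∀ x ∈ A, ((x : ℝ × ℝ).1, -x.2) ∈ A)
    (a b : ℝ)
    (ha : IsGreatest {x : ℝ | ((x, 0) : ℝ × ℝ) ∈ A} a)
    (hb : IsGreatest {y : ℝ | ((0, y) : ℝ × ℝ) ∈ A} b) :
    IsLeast
      {t : ℝ | ∃ m : ℤ × ℤ, m ≠ 0 ∧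
        t = sSup ((fun x : ℝ × ℝ => (m.1 : ℝ) * x.1 + (m.2 : ℝ) * x.2) '' A)}
      (min a b) ∧
    ∀ v : ℝ × ℝ, (∀ x ∈ interior A, 0 < (x : ℝ × ℝ).1 + v.1 ∧ 0 < x.2 + v.2) →
      ∀ c : Set (ℂ × ℂ) → ℝ≥0∞, IsNormalizedCapacity4 c →
        c (mu4 ⁻¹' ((fun x : ℝ × ℝ => x + v) '' interior A)) =
          ENNReal.ofReal (2 * min a b) := by
  obtain ⟨hsystole, hcapacity⟩ := capacity_axis_symmetric_codisc_general hAconv hAint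
    ⟨hsymx, hsymy⟩ ha.isLUB hb.isLUB
  exact ⟨hsystole, fun v hv c ⟨hmono, _, hnorm⟩ => hcapacity v hv c hmono
    (fun r hr => (hnorm r hr).1.ge) fun r hr => (hnorm r hr).2.le⟩
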